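/- arXiv:0907.3853 — 3 statements merged into one kernel-verified Lean document; each statement's English description precedes it below -/
import Mathlib

section
/- Let a, s, b be natural numbers with a ≤ s and s < a + b. Then N(a,s,b) satisfies the recurrence N(a,s,b) = Σ_{i=0}^{a−1} Σ_{j=s+1}^{i+b} N(i,j,b) (the inner sum being empty when i + b ≤ s). -/
/-- A matrix with `r ≥ 1` rows and two columns of nonnegative integers,
represented as a nonempty list of pairs, is *admissible* if its first
components are strictly decreasing and its row sums are strictly increasing. -/
def Admissible (M : List (ℕ × ℕ)) : Prop :=
  M ≠ [] ∧ M.Chain' (fun p q => q.1 < p.1 ∧ p.1 + p.2 < q.1 + q.2)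

/-- The set of admissible lists counted by `N(a,s,b)`: the first row is
`(a, s - a)` (i.e. `m₁ = a` and `m₁ + μ₁ = s`) and the last row has second
component `b`. -/
def Nset (a s b : ℕ) : Set (List (ℕ × ℕ)) :=
  {M | Admissible M ∧
       (∃ p, M.head? = some p ∧ p.1 = a ∧ p.1 + p.2 = s) ∧
       (∃ q, M.getLast? = some q ∧ q.2 = b)}

/-!
Deleting the first row `(a, s - a)` of a matrix counted by `N(a, s, b)` leaves a matrix counted by
`N(i, j, b)` for some `i < a` and `j > s`, unless there is only one row, which forces `s = a + b`.
Along the rows the first entry decreases and the row sum increases, so `j ≤ i + b`; thus only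
finitely many pairs `(i, j)` occur, and the first row of the remaining matrix determines the pair.
-/

section

variable {a s b : ℕ} {p : ℕ × ℕ} {M : List (ℕ × ℕ)}

theorem mem_Nset_iff :
    M ∈ Nset a s b ↔
      (M ≠ [] ∧ M.IsChain fun p q => q.1 < p.1 ∧ p.1 + p.2 < q.1 + q.2) ∧
        (∃ p, M.head? = some p ∧ p.1 = a ∧ p.1 + p.2 = s) ∧ ∃ q, M.getLast? = some q ∧ q.2 = b :=
  Iff.rfl

theorem nil_notMem_Nset : [] ∉ Nset a s b :=
  fun h => h.1.1 rfl

theorem exists_eq_cons_of_mem_Nset (hM : M ∈ Nset a s b) :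
    ∃ m t, M = (a, m) :: t ∧ a + m = s := by
  obtain ⟨-, ⟨⟨_, m⟩, hhead, rfl, hsum⟩, -⟩ := hM
  obtain ⟨t, rfl⟩ := List.head?_eq_some_iff.mp hhead
  exact ⟨m, t, rfl, hsum⟩

theorem singleton_mem_Nset_iff :
    [p] ∈ Nset a s b ↔ p.1 = a ∧ p.1 + p.2 = s ∧ p.2 = b := by
  simp [mem_Nset_iff, -Prod.exists, and_assoc]

theorem cons_mem_Nset_iff (hM : M ≠ []) :
    p :: M ∈ Nset a s b ↔
      p.1 = a ∧ p.1 + p.2 = s ∧ ∃ i j, i < a ∧ s < j ∧ M ∈ Nset i j b := by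
  obtain ⟨q, t, rfl⟩ := List.exists_cons_of_ne_nil hM
  simp only [mem_Nset_iff, List.isChain_cons_cons, List.head?_cons, List.getLast?_cons_cons,
    Option.some.injEq, exists_eq_left']
  constructor
  · rintro ⟨⟨-, ⟨hfst, hsum⟩, hchain⟩, ⟨rfl, rfl⟩, hlast⟩
    exact ⟨rfl, rfl, q.1, q.1 + q.2, hfst, hsum, ⟨hM, hchain⟩, ⟨rfl, rfl⟩, hlast⟩
  · rintro ⟨rfl, rfl, _, _, hfst, hsum, ⟨-, hchain⟩, ⟨rfl, rfl⟩, hlast⟩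
    exact ⟨⟨List.cons_ne_nil _ _, ⟨hfst, hsum⟩, hchain⟩, ⟨rfl, rfl⟩, hlast⟩

theorem le_add_of_mem_Nset (hM : M ∈ Nset a s b) : s ≤ a + b := by
  induction M generalizing a s with
  | nil => exact absurd hM nil_notMem_Nset
  | cons p M ih =>
    rcases eq_or_ne M [] with rfl | hne
    · obtain ⟨rfl, rfl, rfl⟩ := singleton_mem_Nset_iff.mp hM
      rfl
    · obtain ⟨-, -, i, j, hi, hj, htail⟩ := (cons_mem_Nset_iff hne).mp hM
      calc
        s ≤ j := hj.le
        _ ≤ i + b := ih htail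
        _ ≤ a + b := by gcongr

/-- The range of the pairs `(i, j)` of first entry and row sum of the second row of a matrix counted
by `N(a, s, b)`. A sigma type is used so that a sum over the pairs is an iterated sum. -/
def nextRows (a s b : ℕ) : Finset (Σ _ : ℕ, ℕ) :=
  (Finset.range a).sigma fun i => Finset.Icc (s + 1) (i + b)

/-- What can remain of a matrix with at least two rows counted by `N(a, s, b)` when its first row
is deleted. -/
def Ntails (a s b : ℕ) : Set (List (ℕ × ℕ)) :=
  ⋃ x ∈ nextRows a s b, Nset x.1 x.2 b

theorem mem_Ntails_iff : M ∈ Ntails a s b ↔ ∃ i j, i < a ∧ s < j ∧ M ∈ Nset i j b := by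
  simp only [Ntails, nextRows, Set.mem_iUnion, exists_prop, Finset.mem_sigma, Finset.mem_range,
    Finset.mem_Icc, Sigma.exists]
  constructor
  · rintro ⟨i, j, ⟨hi, hj, -⟩, hM⟩
    exact ⟨i, j, hi, hj, hM⟩
  · rintro ⟨i, j, hi, hj, hM⟩
    exact ⟨i, j, ⟨hi, hj, le_add_of_mem_Nset hM⟩, hM⟩

theorem ne_nil_of_mem_Ntails (hM : M ∈ Ntails a s b) : M ≠ [] := by
  rintro rfl
  obtain ⟨i, j, -, -, hnil⟩ := mem_Ntails_iff.mp hM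
  exact nil_notMem_Nset hnil

theorem cons_mem_Nset_iff_eq_nil_or_mem_Ntails :
    p :: M ∈ Nset a s b ↔
      p.1 = a ∧ p.1 + p.2 = s ∧ (M = [] ∧ p.2 = b ∨ M ∈ Ntails a s b) := by
  rcases eq_or_ne M [] with rfl | hM
  · have hnil : [] ∉ Ntails a s b := fun h => ne_nil_of_mem_Ntails h rfl
    simp [singleton_mem_Nset_iff, hnil]
  · simp [cons_mem_Nset_iff hM, mem_Ntails_iff, hM]

theorem Nset_subset_insert_image_cons_Ntails :
    Nset a s b ⊆ insert [(a, s - a)] (List.cons (a, s - a) '' Ntails a s b) := by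
  intro M hM
  obtain ⟨m, t, rfl, rfl⟩ := exists_eq_cons_of_mem_Nset hM
  rw [Nat.add_sub_cancel_left]
  obtain ⟨-, -, ⟨rfl, -⟩ | ht⟩ := cons_mem_Nset_iff_eq_nil_or_mem_Ntails.mp hM
  · exact Set.mem_insert _ _
  · exact Set.mem_insert_of_mem _ ⟨t, ht, rfl⟩

theorem Nset_eq_image_cons_Ntails (has : a ≤ s) (hs : s ≠ a + b) :
    Nset a s b = List.cons (a, s - a) '' Ntails a s b := by
  apply Set.Subset.antisymm
  · refine (Set.subset_insert_iff_of_notMem fun hsingle => hs ?_).mp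
      Nset_subset_insert_image_cons_Ntails
    obtain ⟨-, hsum, rfl⟩ := singleton_mem_Nset_iff.mp hsingle
    exact hsum.symm
  · rintro _ ⟨t, ht, rfl⟩
    exact cons_mem_Nset_iff_eq_nil_or_mem_Ntails.mpr ⟨rfl, Nat.add_sub_cancel' has, .inr ht⟩

theorem finite_Nset (a s b : ℕ) : (Nset a s b).Finite := by
  induction a using Nat.strong_induction_on generalizing s with
  | _ a ih =>
    have htails : (Ntails a s b).Finite :=
      (nextRows a s b).finite_toSet.biUnion fun x hx =>
        ih x.1 (Finset.mem_range.mp (Finset.mem_sigma.mp hx).1) x.2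
    exact ((htails.image _).insert _).subset Nset_subset_insert_image_cons_Ntails

theorem eq_and_eq_of_mem_Nset {i j i' j' b' : ℕ} (hM : M ∈ Nset i j b)
    (hM' : M ∈ Nset i' j' b') : i = i' ∧ j = j' := by
  obtain ⟨m, t, rfl, rfl⟩ := exists_eq_cons_of_mem_Nset hM
  obtain ⟨m', t', heq, rfl⟩ := exists_eq_cons_of_mem_Nset hM'
  obtain ⟨⟨rfl, rfl⟩, -⟩ : (i = i' ∧ m = m') ∧ t = t' := by simpa using heq
  exact ⟨rfl, rfl⟩

theorem pairwise_disjoint_Nset (b : ℕ) :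
    Pairwise (Function.onFun Disjoint fun x : Σ _ : ℕ, ℕ => Nset x.1 x.2 b) := by
  rintro ⟨i, j⟩ ⟨i', j'⟩ hne
  refine Set.disjoint_left.mpr fun M hM hM' => hne ?_
  obtain ⟨rfl, rfl⟩ : i = i' ∧ j = j' := eq_and_eq_of_mem_Nset hM hM'
  rfl

theorem ncard_Ntails (a s b : ℕ) :
    (Ntails a s b).ncard =
      ∑ i ∈ Finset.range a, ∑ j ∈ Finset.Icc (s + 1) (i + b), (Nset i j b).ncard :=
  calc
    (Ntails a s b).ncard = ∑ᶠ x ∈ (nextRows a s b : Set (Σ _ : ℕ, ℕ)), (Nset x.1 x.2 b).ncard :=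
      (nextRows a s b).finite_toSet.ncard_biUnion (fun x _ => finite_Nset x.1 x.2 b)
        ((pairwise_disjoint_Nset b).set_pairwise _)
    _ = ∑ x ∈ nextRows a s b, (Nset x.1 x.2 b).ncard := finsum_mem_coe_finset _ _
    _ = _ := Finset.sum_sigma _ _ _

end

/-- If `a ≤ s` and `s < a + b`, then
`N(a,s,b) = ∑_{i=0}^{a-1} ∑_{j=s+1}^{i+b} N(i,j,b)`
(the inner sum being empty when `i + b ≤ s`). -/
theorem Ncount_recurrence (a s b : ℕ) (has : a ≤ s) (h : s < a + b) :
    (Nset a s b).ncard =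
      ∑ i ∈ Finset.range a, ∑ j ∈ Finset.Icc (s + 1) (i + b), (Nset i j b).ncard := by
  rw [Nset_eq_image_cons_Ntails has h.ne, Set.ncard_image_of_injective _ List.cons_injective,
    ncard_Ntails]
end

section
/- For all natural numbers a and b, G(a,b) = Σ_{i=0}^{a} Σ_{k=0}^{i−1} C(b, k+2) + a·b, where C denotes the binomial coefficient. -/
/-- The set of admissible lists counted by `G(a,b)`: all entries of the first
column are at most `a`, all entries of the second column are at most `b`,
the first entry of the first row is positive, and if there is only one row
then its second entry is strictly less than `b`. -/
def Gset (a b : ℕ) : Set (List (ℕ × ℕ)) :=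
  {M | Admissible M ∧ (∀ p ∈ M, p.1 ≤ a ∧ p.2 ≤ b) ∧
       (∃ p, M.head? = some p ∧ 0 < p.1) ∧
       (M.length = 1 → ∃ p, M.head? = some p ∧ p.2 < b)}

/-!
Fix the first row `(m, u)`, where `0 < m ≤ a` and `u < b`. The rows below it have first entry less
than `m`, second entry at most `b`, and row sum at least `t = m + u + 1`. Let `T(m, t)` be the
number of such lists of rows. If `m ≤ t ≤ m + b`, a list for the bounds `(m + 1, t)`

* has all row sums at least `t + 1`, or
* has row sum `t` in its top row and all first entries less than `m`, or
* has top row `(m, t - m)`, followed by a list for the bounds `(m, t + 1)`.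

The second kind is counted by `T(m, t) - T(m, t + 1)` and the third by `T(m, t + 1)`, so
`T(m + 1, t) = T(m + 1, t + 1) + T(m, t)`. This is Pascal's rule for partial sums of binomial
coefficients, and `T(m, t) = ∑_{k ≤ m} C(b + m - t, k)`. For `t = m + u + 1` the upper index is
`b - u - 1`, and the hockey-stick identity sums this over `u`.
-/

open Finset (range Ico)

section BinomialSums

theorem sum_range_upper_choose (n k : ℕ) : ∑ i ∈ range n, i.choose k = n.choose (k + 1) := by
  induction n with
  | zero => rfl
  | succ n ih => rw [Finset.sum_range_succ, ih, Nat.choose_succ_succ', add_comm]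

theorem sum_range_choose_succ (n m : ℕ) :
    ∑ k ∈ range (m + 1), (n + 1).choose k =
      ∑ k ∈ range (m + 1), n.choose k + ∑ k ∈ range m, n.choose k := by
  rw [Finset.sum_range_succ', Finset.sum_range_succ' (n.choose ·)]
  simp only [Nat.choose_succ_succ', Finset.sum_add_distrib, Nat.choose_zero_right]
  ring

theorem sum_sum_range_choose_sub (b m : ℕ) :
    ∑ u ∈ range b, ∑ k ∈ range (m + 1), (b - 1 - u).choose k =
      ∑ k ∈ range m, b.choose (k + 2) + b := by
  calc ∑ u ∈ range b, ∑ k ∈ range (m + 1), (b - 1 - u).choose k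
    _ = ∑ u ∈ range b, ∑ k ∈ range (m + 1), u.choose k :=
      Finset.sum_range_reflect (fun u => ∑ k ∈ range (m + 1), u.choose k) b
    _ = ∑ k ∈ range (m + 1), b.choose (k + 1) := by
      rw [Finset.sum_comm]
      simp only [sum_range_upper_choose]
    _ = ∑ k ∈ range m, b.choose (k + 2) + b := by
      rw [Finset.sum_range_succ', zero_add, Nat.choose_one_right]

end BinomialSums

theorem encard_biUnion_image_cons {α : Type*} (heads : Finset α) (tails : α → Set (List α)) :
    (⋃ p ∈ heads, List.cons p '' tails p).encard = ∑ p ∈ heads, (tails p).encard := by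
  have disjoint_images : (heads : Set α).PairwiseDisjoint fun p => List.cons p '' tails p :=
    fun p _ q _ hpq => Set.disjoint_image_image fun _ _ _ _ h => hpq (List.cons.inj h).1
  calc (⋃ p ∈ heads, List.cons p '' tails p).encard
    _ = ∑ p ∈ heads, (List.cons p '' tails p).encard := by
      rw [← finsum_mem_coe_finset, ← heads.finite_toSet.encard_biUnion disjoint_images]
      rfl
    _ = ∑ p ∈ heads, (tails p).encard := by
      simp only [List.cons_injective.encard_image]

/-- The relation required of consecutive rows `p`, `q` of an admissible matrix. It is
transitive, so it then holds for any two rows with `p` above `q`. -/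
def RowStep (p q : ℕ × ℕ) : Prop :=
  q.1 < p.1 ∧ p.1 + p.2 < q.1 + q.2

instance : IsTrans (ℕ × ℕ) RowStep :=
  ⟨fun _ _ _ hpq hqr => ⟨hqr.1.trans hpq.1, hpq.2.trans hqr.2⟩⟩

theorem RowStep.snd_lt {p q : ℕ × ℕ} (h : RowStep p q) : p.2 < q.2 := by
  unfold RowStep at h
  lia

/-- The possibly empty lists of rows satisfying the monotonicity conditions of an admissible matrix,
with all first entries less than `m`, all second entries at most `b` and all row sums at least `t`.
For suitable `m` and `t` these are the lists of rows that can follow a given row. -/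
def rowChains (b m t : ℕ) : Set (List (ℕ × ℕ)) :=
  {l | l.Pairwise RowStep ∧ ∀ p ∈ l, p.1 < m ∧ p.2 ≤ b ∧ t ≤ p.1 + p.2}

namespace rowChains

variable {b m t : ℕ}

theorem nil_mem : [] ∈ rowChains b m t := by
  simp [rowChains]

theorem cons_mem_iff {p : ℕ × ℕ} {l : List (ℕ × ℕ)} :
    p :: l ∈ rowChains b m t ↔
      (p.1 < m ∧ p.2 ≤ b ∧ t ≤ p.1 + p.2) ∧ l ∈ rowChains b p.1 (p.1 + p.2 + 1) := by
  simp only [rowChains, Set.mem_ofPred_eq, List.pairwise_cons, List.forall_mem_cons, RowStep]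
  grind

theorem subset_of_le {m' t' : ℕ} (hm : m ≤ m') (ht : t' ≤ t) :
    rowChains b m t ⊆ rowChains b m' t' :=
  fun _ hl => ⟨hl.1, fun p hp =>
    have ⟨hp₁, hp₂, hp₃⟩ := hl.2 p hp
    ⟨hp₁.trans_le hm, hp₂, ht.trans hp₃⟩⟩

theorem inter_subset {m' t' : ℕ} :
    rowChains b m' t ∩ rowChains b m t' ⊆ rowChains b m t :=
  fun _ ⟨hl, hl'⟩ => ⟨hl.1, fun p hp => ⟨(hl'.2 p hp).1, (hl.2 p hp).2⟩⟩

theorem disjoint_image_cons {p : ℕ × ℕ} {tails : Set (List (ℕ × ℕ))}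
    (hp : ¬(p.1 < m ∧ t ≤ p.1 + p.2)) : Disjoint (rowChains b m t) (List.cons p '' tails) := by
  rw [Set.disjoint_right]
  rintro _ ⟨l, -, rfl⟩ hl
  obtain ⟨⟨hp₁, -, hp₂⟩, -⟩ := cons_mem_iff.mp hl
  exact hp ⟨hp₁, hp₂⟩

theorem eq_singleton_nil (h : m = 0 ∨ b + m ≤ t) : rowChains b m t = {[]} := by
  ext l
  cases l with
  | nil => simp [nil_mem]
  | cons p l => simp only [cons_mem_iff, Set.mem_singleton_iff]; grind

theorem succ_eq_union (hmt : m ≤ t) (htb : t ≤ m + b) :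
    rowChains b (m + 1) t =
      rowChains b (m + 1) (t + 1) ∪
        (rowChains b m t \ rowChains b m (t + 1) ∪
          List.cons (m, t - m) '' rowChains b m (t + 1)) := by
  ext l
  cases l with
  | nil => simp [nil_mem]
  | cons p l =>
    -- By `cons_mem_iff` the bounds `m` and `t` constrain only the top row `p`.
    simp only [Set.mem_union, Set.mem_sdiff, Set.mem_image, cons_mem_iff, List.cons.injEq]
    grind

theorem encard_succ (hmt : m ≤ t) (htb : t ≤ m + b) :
    (rowChains b (m + 1) t).encard =
      (rowChains b (m + 1) (t + 1)).encard + (rowChains b m t).encard := by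
  have disjoint_image : Disjoint (rowChains b m t \ rowChains b m (t + 1))
      (List.cons (m, t - m) '' rowChains b m (t + 1)) :=
    (disjoint_image_cons (by lia)).mono_left Set.sdiff_subset
  have disjoint_union : Disjoint (rowChains b (m + 1) (t + 1))
      (rowChains b m t \ rowChains b m (t + 1) ∪
        List.cons (m, t - m) '' rowChains b m (t + 1)) := by
    refine Set.disjoint_union_right.mpr ⟨?_, disjoint_image_cons (by lia)⟩
    exact Set.disjoint_left.mpr fun l hl hl' => hl'.2 (inter_subset ⟨hl, hl'.1⟩)
  rw [succ_eq_union hmt htb, Set.encard_union_eq disjoint_union,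
    Set.encard_union_eq disjoint_image, List.cons_injective.encard_image,
    Set.encard_sdiff_add_encard_of_subset (subset_of_le le_rfl t.le_succ)]

theorem encard_eq_sum_choose {n : ℕ} (hn : n ≤ b + 1) (h : t + n = b + m) :
    (rowChains b m t).encard = (∑ k ∈ range (m + 1), n.choose k : ℕ) := by
  induction n generalizing m t with
  | zero =>
    rw [eq_singleton_nil (.inr (by lia)), Set.encard_singleton, Finset.sum_range_succ']
    simp
  | succ n ih =>
    cases m with
    | zero => simp [eq_singleton_nil]
    | succ m =>
      rw [encard_succ (by lia) (by lia), ih (by lia) (by lia), ih (by lia) (by lia),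
        sum_range_choose_succ, Nat.cast_add]

end rowChains

theorem admissible_iff_pairwise {M : List (ℕ × ℕ)} :
    Admissible M ↔ M ≠ [] ∧ M.Pairwise RowStep :=
  and_congr_right fun _ => List.isChain_iff_pairwise (R := RowStep)

theorem cons_mem_Gset_iff {a b : ℕ} {p : ℕ × ℕ} {l : List (ℕ × ℕ)} :
    p :: l ∈ Gset a b ↔
      p ∈ Ico 1 (a + 1) ×ˢ range b ∧ l ∈ rowChains b p.1 (p.1 + p.2 + 1) := by
  simp only [Gset, rowChains, admissible_iff_pairwise, Set.mem_ofPred_eq, List.pairwise_cons,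
    List.forall_mem_cons, List.head?_cons, Option.some.injEq, exists_eq_left', List.length_cons,
    Nat.add_eq_right, List.length_eq_zero_iff, Finset.mem_product, Finset.mem_Ico,
    Finset.mem_range]
  constructor
  · rintro ⟨⟨-, head_step, hl⟩, ⟨hp, bounds⟩, hp_pos, single_lt⟩
    have snd_lt : p.2 < b := by
      by_cases hnil : l = []
      · exact single_lt hnil
      · obtain ⟨q, hq⟩ := List.exists_mem_of_ne_nil l hnil
        exact (head_step q hq).snd_lt.trans_le (bounds q hq).2
    exact ⟨⟨⟨hp_pos, by lia⟩, snd_lt⟩, hl,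
      fun q hq => ⟨(head_step q hq).1, (bounds q hq).2, (head_step q hq).2⟩⟩
  · rintro ⟨⟨⟨hp_pos, hpa⟩, hpb⟩, hl, bounds⟩
    exact ⟨⟨List.cons_ne_nil p l, fun q hq => ⟨(bounds q hq).1, (bounds q hq).2.2⟩, hl⟩,
      ⟨⟨by lia, hpb.le⟩, fun q hq => ⟨by grind, (bounds q hq).2.1⟩⟩, hp_pos, fun _ => hpb⟩

theorem Gset_eq_biUnion (a b : ℕ) :
    Gset a b = ⋃ p ∈ Ico 1 (a + 1) ×ˢ range b,
      List.cons p '' rowChains b p.1 (p.1 + p.2 + 1) := by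
  ext l
  cases l with
  | nil => simp [Gset, Admissible]
  | cons p l => rw [cons_mem_Gset_iff]; simp only [Set.mem_iUnion, Set.mem_image]; grind

theorem encard_Gset (a b : ℕ) :
    (Gset a b).encard =
      (∑ p ∈ Ico 1 (a + 1) ×ˢ range b, ∑ k ∈ range (p.1 + 1), (b - 1 - p.2).choose k : ℕ) := by
  rw [Gset_eq_biUnion, encard_biUnion_image_cons, Nat.cast_sum]
  refine Finset.sum_congr rfl fun p hp => rowChains.encard_eq_sum_choose (by lia) ?_
  have : p.2 < b := Finset.mem_range.mp (Finset.mem_product.mp hp).2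
  lia

/-- `G(a,b) = ∑_{i=0}^{a} ∑_{k=0}^{i-1} C(b, k+2) + a·b`. -/
theorem Gcount_eq (a b : ℕ) :
    (Gset a b).ncard =
      (∑ i ∈ Finset.range (a + 1), ∑ k ∈ Finset.range i, Nat.choose b (k + 2)) + a * b := by
  calc (Gset a b).ncard
    _ = ∑ p ∈ Ico 1 (a + 1) ×ˢ range b, ∑ k ∈ range (p.1 + 1), (b - 1 - p.2).choose k := by
      rw [Set.ncard_def, encard_Gset, ENat.toNat_natCast]
    _ = ∑ i ∈ Ico 1 (a + 1), (∑ k ∈ range i, b.choose (k + 2) + b) := by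
      simp only [Finset.sum_product, sum_sum_range_choose_sub]
    _ = ∑ i ∈ Ico 1 (a + 1), ∑ k ∈ range i, b.choose (k + 2) + a * b := by
      simp [Finset.sum_add_distrib]
    _ = ∑ i ∈ range (a + 1), ∑ k ∈ range i, b.choose (k + 2) + a * b := by
      rw [Finset.range_eq_Ico, Finset.sum_eq_sum_Ico_succ_bot a.succ_pos, Finset.sum_range_zero,
        zero_add]
end

section
/- Let (N, W) and (N', W') be complete simple games with exactly two types, with classes N₁ ≻ N₂ and N₁' ≻ N₂' respectively. Then (N, W) and (N', W') are isomorphic (i.e., there is a bijection f : N → N' such that S ∈ W if and only if f(S) ∈ W' for every coalition S) if and only if (|N₁|, |N₂|) = (|N₁'|, |N₂'|) and the set of δ-minimal winning profiles of (N, W) equals the set of δ-minimal winning profiles of (N', W'). -/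
/-- A simple game on `Fin n`: the grand coalition wins, the empty coalition
loses, and winning coalitions are closed under supersets. -/
def IsSimpleGame {n : ℕ} (W : Set (Finset (Fin n))) : Prop :=
  Finset.univ ∈ W ∧ ∅ ∉ W ∧ ∀ S ∈ W, ∀ T, S ⊆ T → T ∈ W

/-- Player `i` is at least as desirable as player `j`. -/
def MoreDesirable {n : ℕ} (W : Set (Finset (Fin n))) (i j : Fin n) : Prop :=
  ∀ S : Finset (Fin n), i ∉ S → j ∉ S → insert j S ∈ W → insert i S ∈ W

/-- Players `i` and `j` are equally desirable. -/
def EquallyDesirable {n : ℕ} (W : Set (Finset (Fin n))) (i j : Fin n) : Prop :=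
  MoreDesirable W i j ∧ MoreDesirable W j i

/-- Player `i` is strictly more desirable than player `j`. -/
def StrictlyMoreDesirable {n : ℕ} (W : Set (Finset (Fin n))) (i j : Fin n) : Prop :=
  MoreDesirable W i j ∧ ¬ MoreDesirable W j i

/-- The game is complete: the desirability preordering is total. -/
def IsCompleteGame {n : ℕ} (W : Set (Finset (Fin n))) : Prop :=
  ∀ i j : Fin n, MoreDesirable W i j ∨ MoreDesirable W j i

/-- The game has exactly two types of players, with classes `N₁ ≻ N₂`:
both classes are nonempty, they partition the player set, players within a
class are equally desirable, and every player of `N₁` is strictly more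
desirable than every player of `N₂`. -/
def TwoTypes {n : ℕ} (W : Set (Finset (Fin n))) (N₁ N₂ : Finset (Fin n)) : Prop :=
  N₁.Nonempty ∧ N₂.Nonempty ∧ Disjoint N₁ N₂ ∧ N₁ ∪ N₂ = Finset.univ ∧
  (∀ i ∈ N₁, ∀ j ∈ N₁, EquallyDesirable W i j) ∧
  (∀ i ∈ N₂, ∀ j ∈ N₂, EquallyDesirable W i j) ∧
  (∀ i ∈ N₁, ∀ j ∈ N₂, StrictlyMoreDesirable W i j)

/-- A profile `(p₁, p₂)` is winning if some winning coalition intersects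
`N₁` in `p₁` players and `N₂` in `p₂` players. -/
def WinningProfile {n : ℕ} (W : Set (Finset (Fin n))) (N₁ N₂ : Finset (Fin n))
    (p : ℕ × ℕ) : Prop :=
  ∃ S ∈ W, (S ∩ N₁).card = p.1 ∧ (S ∩ N₂).card = p.2

/-- The set of δ-minimal winning profiles: winning profiles `m` such that
no winning profile `q ≠ m` is δ-dominated by `m`, where `m` δ-dominates `q`
iff `q₁ ≤ m₁` and `q₁ + q₂ ≤ m₁ + m₂`. -/
def DeltaMinProfiles {n : ℕ} (W : Set (Finset (Fin n))) (N₁ N₂ : Finset (Fin n)) :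
    Set (ℕ × ℕ) :=
  {m | WinningProfile W N₁ N₂ m ∧
       ∀ q, WinningProfile W N₁ N₂ q → q.1 ≤ m.1 → q.1 + q.2 ≤ m.1 + m.2 → q = m}

/-!
The δ-ordering is the product order on the pairs `(p₁, p₁ + p₂)`. In a two-type game a coalition
whose profile δ-dominates that of a winning coalition can be reached from the latter by exchanging
players for players at least as desirable and then adding players. Hence a coalition wins exactly
when its profile δ-dominates some δ-minimal winning profile, so that any bijection matching the
classes of two games with equal invariants is an isomorphism. Conversely, the first class consists
of the players at least as desirable as everybody, so isomorphisms match the classes and preserve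
profiles.
-/

open Finset Function

section Finset

variable {α β : Type*}

theorem sdiff_nonempty_of_not_subset_of_card_le [DecidableEq α] {S T : Finset α} (hST : ¬S ⊆ T)
    (hcard : #S ≤ #T) : (T \ S).Nonempty :=
  card_pos.1 <| (card_pos.2 (sdiff_nonempty.2 hST)).trans_le (card_sdiff_le_card_sdiff_iff.2 hcard)

theorem card_insert_erase [DecidableEq α] {S : Finset α} {i j : α} (hi : i ∈ S) (hj : j ∉ S) :
    #(insert j (S.erase i)) = #S := by
  rw [card_insert_of_notMem (mt mem_of_mem_erase hj), card_erase_add_one hi]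

theorem exists_exchange_card_inter_le [DecidableEq α] {A S T : Finset α}
    (hA : #(S ∩ A) ≤ #(T ∩ A)) (hcard : #S ≤ #T) (hST : ¬S ⊆ T) :
    ∃ i ∈ S \ T, ∃ j ∈ T \ S, (i ∈ A → j ∈ A) ∧
      #(insert j (S.erase i) ∩ A) ≤ #(T ∩ A) := by
  -- Elements of `A` are exchanged first, so an element outside `A` is given up (possibly for one
  -- of `A`) only when `S ∩ A` already lies in `T`.
  by_cases hSTA : S ∩ A ⊆ T ∩ A
  · obtain ⟨i, hi⟩ := sdiff_nonempty.2 hST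
    obtain ⟨j, hj⟩ := sdiff_nonempty_of_not_subset_of_card_le hST hcard
    have ⟨hiS, hiT⟩ := mem_sdiff.1 hi
    have hiA : i ∉ A := fun hiA => hiT (mem_of_mem_inter_left (hSTA (mem_inter.2 ⟨hiS, hiA⟩)))
    have hsubset : insert j (S.erase i) ∩ A ⊆ T ∩ A := by grind
    exact ⟨i, hi, j, hj, fun h => absurd h hiA, card_le_card hsubset⟩
  · obtain ⟨i, hi⟩ := sdiff_nonempty.2 hSTA
    obtain ⟨j, hj⟩ := sdiff_nonempty_of_not_subset_of_card_le hSTA hA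
    refine ⟨i, by grind, j, by grind, by grind, ?_⟩
    have hinter : insert j (S.erase i) ∩ A = insert j ((S ∩ A).erase i) := by grind
    rwa [hinter, card_insert_erase (mem_sdiff.1 hi).1 (mem_sdiff.1 hj).2]

theorem card_image_inter_of_mem_iff [DecidableEq α] [DecidableEq β] {f : α → β}
    (hf : Injective f) {A : Finset α} {B : Finset β} (hAB : ∀ a, f a ∈ B ↔ a ∈ A) (S : Finset α) :
    #(S.image f ∩ B) = #(S ∩ A) := by
  have himage : S.image f ∩ B = (S ∩ A).image f := by grind
  rw [himage, card_image_of_injective _ hf]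

theorem finset_image_surjective [DecidableEq β] {f : α → β} (hf : Surjective f) :
    Surjective fun S : Finset α => S.image f := fun T => by
  classical
  exact ⟨T.image (surjInv hf),
    by simp only [image_image, (rightInverse_surjInv hf).comp_eq_id, image_id]⟩

theorem exists_equiv_mem_iff_of_card_eq [Fintype α] [Fintype β]
    (hcard : Fintype.card α = Fintype.card β) {A : Finset α} {B : Finset β} (hAB : #A = #B) :
    ∃ f : α ≃ β, ∀ a, f a ∈ B ↔ a ∈ A := by
  classical
  let g : α ≃ β := Fintype.equivOfCardEq hcard
  let e : {b // b ∈ A.map g.toEmbedding} ≃ {b // b ∈ B} :=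
    equivOfCardEq ((card_map _).trans hAB)
  refine ⟨g.trans e.extendSubtype, fun a => ?_⟩
  have hmem : g a ∈ A.map g.toEmbedding ↔ a ∈ A := mem_map' _
  by_cases ha : a ∈ A
  · exact iff_of_true (e.extendSubtype_mem _ (hmem.2 ha)) ha
  · exact iff_of_false (e.extendSubtype_not_mem _ (mt hmem.1 ha)) ha

end Finset

section Profile

variable {α β : Type*}

/-- The profile of a coalition `S`: how many players of each of the two classes it contains. -/
def profile [DecidableEq α] (N₁ N₂ S : Finset α) : ℕ × ℕ :=
  (#(S ∩ N₁), #(S ∩ N₂))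

/-- The partial sums `(p₁, p₁ + p₂)` of a profile. The δ-ordering on profiles is the pullback of
the product order along this map: `p` δ-dominates `q` iff `partialSums q ≤ partialSums p`. -/
def partialSums (p : ℕ × ℕ) : ℕ × ℕ :=
  (p.1, p.1 + p.2)

theorem partialSums_injective : Injective partialSums := by
  rintro ⟨p₁, p₂⟩ ⟨q₁, q₂⟩ h
  simp only [partialSums, Prod.mk.injEq] at h ⊢
  omega

theorem profile_univ [Fintype α] [DecidableEq α] (N₁ N₂ : Finset α) :
    profile N₁ N₂ univ = (#N₁, #N₂) := by
  simp only [profile, univ_inter]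

theorem partialSums_profile [Fintype α] [DecidableEq α] {N₁ N₂ : Finset α}
    (h : IsCompl N₁ N₂) (S : Finset α) :
    partialSums (profile N₁ N₂ S) = (#(S ∩ N₁), #S) := by
  rw [← h.compl_eq, partialSums, profile, ← sdiff_eq_inter_compl, card_inter_add_card_sdiff]

theorem profile_image [Fintype α] [DecidableEq α] [Fintype β] [DecidableEq β] {f : α → β}
    (hf : Injective f) {N₁ N₂ : Finset α} {N₁' N₂' : Finset β}
    (h : IsCompl N₁ N₂) (h' : IsCompl N₁' N₂') (hmem : ∀ i, f i ∈ N₁' ↔ i ∈ N₁) (S : Finset α) :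
    profile N₁' N₂' (S.image f) = profile N₁ N₂ S := by
  apply partialSums_injective
  rw [partialSums_profile h, partialSums_profile h', card_image_inter_of_mem_iff hf hmem,
    card_image_of_injective S hf]

theorem exists_equiv_mem_left_iff [Fintype α] [Fintype β] {N₁ N₂ : Finset α}
    {N₁' N₂' : Finset β} (h : IsCompl N₁ N₂) (h' : IsCompl N₁' N₂')
    (hcard : (#N₁, #N₂) = (#N₁', #N₂')) :
    ∃ f : α ≃ β, ∀ i, f i ∈ N₁' ↔ i ∈ N₁ := by
  classical
  obtain ⟨hcard₁, hcard₂⟩ := Prod.mk.inj hcard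
  refine exists_equiv_mem_iff_of_card_eq ?_ hcard₁
  calc
    Fintype.card α = #N₁ + #N₂ := by rw [← h.compl_eq, card_add_card_compl]
    _ = #N₁' + #N₂' := by rw [hcard₁, hcard₂]
    _ = Fintype.card β := by rw [← h'.compl_eq, card_add_card_compl]

end Profile

section Game

variable {n n' : ℕ} {W : Set (Finset (Fin n))} {W' : Set (Finset (Fin n'))}
  {N₁ N₂ : Finset (Fin n)} {N₁' N₂' : Finset (Fin n')}

theorem IsSimpleGame.isUpperSet (hW : IsSimpleGame W) : IsUpperSet W :=
  fun S T hST hS => hW.2.2 S hS T hST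

theorem MoreDesirable.insert_erase_mem {i j : Fin n} (h : MoreDesirable W j i)
    {S : Finset (Fin n)} (hS : S ∈ W) (hi : i ∈ S) (hj : j ∉ S) :
    insert j (S.erase i) ∈ W :=
  h _ (mt mem_of_mem_erase hj) (notMem_erase i S) (by rwa [insert_erase hi])

theorem mem_of_card_inter_le_of_card_le (hW : IsUpperSet W) {A : Finset (Fin n)}
    (hA : ∀ i j, (j ∈ A → i ∈ A) → MoreDesirable W i j) {S T : Finset (Fin n)} (hS : S ∈ W)
    (hinter : #(S ∩ A) ≤ #(T ∩ A)) (hcard : #S ≤ #T) : T ∈ W := by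
  induction hk : #(S \ T) using Nat.strong_induction_on generalizing S with
  | _ k ih =>
    by_cases hST : S ⊆ T
    · exact hW hST hS
    obtain ⟨i, hi, j, hj, hij, hinter'⟩ := exists_exchange_card_inter_le hinter hcard hST
    have hiS := (mem_sdiff.1 hi).1
    have ⟨hjT, hjS⟩ := mem_sdiff.1 hj
    have hsdiff : insert j (S.erase i) \ T = (S \ T).erase i := by
      rw [insert_sdiff_of_mem _ hjT, erase_sdiff_comm]
    refine ih _ ?_ ((hA j i hij).insert_erase_mem hS hiS hjS) hinter'
      ((card_insert_erase hiS hjS).trans_le hcard) rfl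
    rw [hsdiff, ← hk]
    exact card_erase_lt_of_mem hi

theorem winningProfile_iff_exists_profile_eq {p : ℕ × ℕ} :
    WinningProfile W N₁ N₂ p ↔ ∃ S ∈ W, profile N₁ N₂ S = p := by
  simp only [WinningProfile, profile, Prod.ext_iff]

theorem exists_mem_deltaMinProfiles_partialSums_le {p : ℕ × ℕ} (hp : WinningProfile W N₁ N₂ p) :
    ∃ m ∈ DeltaMinProfiles W N₁ N₂, partialSums m ≤ partialSums p := by
  obtain ⟨_, hmp, ⟨m, hm, rfl⟩, hmin⟩ := exists_minimal_le_of_wellFoundedLT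
    (· ∈ partialSums '' {q | WinningProfile W N₁ N₂ q}) _ (Set.mem_image_of_mem _ hp)
  refine ⟨m, ⟨hm, fun q hq hfst hsum => partialSums_injective ?_⟩, hmp⟩
  have hqm : partialSums q ≤ partialSums m := ⟨hfst, hsum⟩
  exact hqm.antisymm (hmin (Set.mem_image_of_mem _ hq) hqm)

namespace TwoTypes

theorem isCompl (h : TwoTypes W N₁ N₂) : IsCompl N₁ N₂ :=
  ⟨h.2.2.1, codisjoint_iff.2 h.2.2.2.1⟩

theorem moreDesirable_iff (h : TwoTypes W N₁ N₂) {i j : Fin n} :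
    MoreDesirable W i j ↔ (j ∈ N₁ → i ∈ N₁) := by
  have hmem₂ (k : Fin n) : k ∈ N₂ ↔ k ∉ N₁ := by rw [← h.isCompl.compl_eq, mem_compl]
  obtain ⟨-, -, -, -, h₁, h₂, h₁₂⟩ := h
  by_cases hi : i ∈ N₁ <;> by_cases hj : j ∈ N₁
  · exact iff_of_true (h₁ i hi j hj).1 fun _ => hi
  · exact iff_of_true (h₁₂ i hi j ((hmem₂ j).2 hj)).1 fun _ => hi
  · exact iff_of_false (h₁₂ j hj i ((hmem₂ i).2 hi)).2 fun hji => hi (hji hj)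
  · exact iff_of_true (h₂ i ((hmem₂ i).2 hi) j ((hmem₂ j).2 hj)).1 fun hj' => absurd hj' hj

theorem mem_left_iff_forall_moreDesirable (h : TwoTypes W N₁ N₂) {i : Fin n} :
    i ∈ N₁ ↔ ∀ j, MoreDesirable W i j := by
  obtain ⟨a, ha⟩ := h.1
  exact ⟨fun hi j => h.moreDesirable_iff.2 fun _ => hi, fun hi => h.moreDesirable_iff.1 (hi a) ha⟩

theorem mem_iff_exists_deltaMinProfiles (h : TwoTypes W N₁ N₂) (hW : IsUpperSet W)
    {T : Finset (Fin n)} :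
    T ∈ W ↔ ∃ m ∈ DeltaMinProfiles W N₁ N₂, partialSums m ≤ partialSums (profile N₁ N₂ T) := by
  constructor
  · intro hT
    exact exists_mem_deltaMinProfiles_partialSums_le
      (winningProfile_iff_exists_profile_eq.2 ⟨T, hT, rfl⟩)
  · rintro ⟨m, ⟨hm, -⟩, hmT⟩
    obtain ⟨S, hS, rfl⟩ := winningProfile_iff_exists_profile_eq.1 hm
    rw [partialSums_profile h.isCompl, partialSums_profile h.isCompl] at hmT
    exact mem_of_card_inter_le_of_card_le hW (fun _ _ => h.moreDesirable_iff.2) hS hmT.1 hmT.2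

end TwoTypes

section Isomorphism

variable {f : Fin n → Fin n'}

theorem moreDesirable_apply_iff (hf : Bijective f)
    (hiso : ∀ S : Finset (Fin n), S ∈ W ↔ S.image f ∈ W') {i j : Fin n} :
    MoreDesirable W' (f i) (f j) ↔ MoreDesirable W i j := by
  simp only [MoreDesirable, (finset_image_surjective hf.surjective).forall,
    hf.injective.mem_finset_image, ← image_insert, ← hiso]

theorem TwoTypes.apply_mem_left_iff (h : TwoTypes W N₁ N₂) (h' : TwoTypes W' N₁' N₂')
    (hf : Bijective f) (hiso : ∀ S : Finset (Fin n), S ∈ W ↔ S.image f ∈ W') (i : Fin n) :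
    f i ∈ N₁' ↔ i ∈ N₁ := by
  rw [h.mem_left_iff_forall_moreDesirable, h'.mem_left_iff_forall_moreDesirable,
    hf.surjective.forall]
  exact forall_congr' fun _ => moreDesirable_apply_iff hf hiso

theorem deltaMinProfiles_eq_of_profile_image (hf : Surjective f)
    (hiso : ∀ S : Finset (Fin n), S ∈ W ↔ S.image f ∈ W')
    (hprofile : ∀ S, profile N₁' N₂' (S.image f) = profile N₁ N₂ S) :
    DeltaMinProfiles W N₁ N₂ = DeltaMinProfiles W' N₁' N₂' := by
  have hwin (p : ℕ × ℕ) : WinningProfile W N₁ N₂ p ↔ WinningProfile W' N₁' N₂' p := by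
    simp only [winningProfile_iff_exists_profile_eq, (finset_image_surjective hf).exists, hiso,
      hprofile]
  simp only [DeltaMinProfiles, hwin]

end Isomorphism

end Game

/-- Part B (uniqueness) of the Carreras–Freixas parametrization theorem:
two complete simple games with exactly two types are isomorphic if and only
if their class cardinalities coincide and their sets of δ-minimal winning
profiles coincide. -/
theorem isomorphic_iff_same_invariants {n n' : ℕ} (hn : 1 ≤ n) (hn' : 1 ≤ n')
    (W : Set (Finset (Fin n))) (W' : Set (Finset (Fin n')))
    (N₁ N₂ : Finset (Fin n)) (N₁' N₂' : Finset (Fin n'))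
    (hW : IsSimpleGame W) (hc : IsCompleteGame W) (h2 : TwoTypes W N₁ N₂)
    (hW' : IsSimpleGame W') (hc' : IsCompleteGame W') (h2' : TwoTypes W' N₁' N₂') :
    (∃ f : Fin n → Fin n', Function.Bijective f ∧
        ∀ S : Finset (Fin n), S ∈ W ↔ S.image f ∈ W') ↔
      (N₁.card, N₂.card) = (N₁'.card, N₂'.card) ∧
        DeltaMinProfiles W N₁ N₂ = DeltaMinProfiles W' N₁' N₂' := by
  constructor
  · rintro ⟨f, hf, hiso⟩
    have hprofile := profile_image hf.injective h2.isCompl h2'.isCompl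
      (h2.apply_mem_left_iff h2' hf hiso)
    refine ⟨?_, deltaMinProfiles_eq_of_profile_image hf.surjective hiso hprofile⟩
    rw [← profile_univ, ← profile_univ, ← hprofile, image_univ_of_surjective hf.surjective]
  · rintro ⟨hcard, hmin⟩
    obtain ⟨f, hf⟩ := exists_equiv_mem_left_iff h2.isCompl h2'.isCompl hcard
    refine ⟨f, f.bijective, fun S => ?_⟩
    rw [h2.mem_iff_exists_deltaMinProfiles hW.isUpperSet,
      h2'.mem_iff_exists_deltaMinProfiles hW'.isUpperSet,
      profile_image f.injective h2.isCompl h2'.isCompl hf, hmin]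
end
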